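/- Let p, q ∈ ℝ^{2n} be configurations each consisting of n pairwise distinct points in ℝ². Then g_ij(q)ᵀ g_ik(q) = g_ij(p)ᵀ g_ik(p) for all triples of distinct indices i,j,k (i.e., f_K(q) = f_K(p)) if and only if there exists an orthogonal matrix R ∈ O(2) such that g_ij(q) = R·g_ij(p) for all pairs of distinct indices i,j (i.e., the bearing vectors of q agree with those of p up to a single common rotation or reflection). -/

import Mathlib

open Matrix Real

noncomputable section

/-- Points in the plane. -/
abbrev Vec2 := Fin 2 → ℝ

/-- Euclidean norm of a planar vector. -/
noncomputable def nrm (x : Vec2) : ℝ := Real.sqrt (x ⬝ᵥ x)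

/-- The bearing `g(x,y) = (x - y)/‖x - y‖`. -/
noncomputable def brg (x y : Vec2) : Vec2 := (nrm (x - y))⁻¹ • (x - y)

lemma orth_rot (c s : ℝ) (h : c*c+s*s=1) :
    (!![c, -s; s, c] : Matrix (Fin 2) (Fin 2) ℝ) ∈ Matrix.orthogonalGroup (Fin 2) ℝ := by
  rw [Matrix.mem_orthogonalGroup_iff]
  ext a b
  fin_cases a <;> fin_cases b <;> simp [Matrix.mul_apply, Fin.sum_univ_two, Matrix.star_apply] <;>
    linarith

lemma orth_refl (c s : ℝ) (h : c*c+s*s=1) :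
    (!![c, s; s, -c] : Matrix (Fin 2) (Fin 2) ℝ) ∈ Matrix.orthogonalGroup (Fin 2) ℝ := by
  rw [Matrix.mem_orthogonalGroup_iff]
  ext a b
  fin_cases a <;> fin_cases b <;> simp [Matrix.mul_apply, Fin.sum_univ_two, Matrix.star_apply] <;>
    linarith

lemma vec2_ext {u v : Vec2} (h0 : u 0 = v 0) (h1 : u 1 = v 1) : u = v := by
  ext a
  fin_cases a
  · exact h0
  · exact h1

/-- planar cross product -/
def crs (u v : Vec2) : ℝ := u 0 * v 1 - u 1 * v 0

lemma dot2 (u v : Vec2) : u ⬝ᵥ v = u 0 * v 0 + u 1 * v 1 := by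
  simp [dotProduct, Fin.sum_univ_two]

lemma lagr (u v : Vec2) : crs u v ^ 2 = (u ⬝ᵥ u) * (v ⬝ᵥ v) - (u ⬝ᵥ v) ^ 2 := by
  simp only [dot2, crs]; ring

lemma decomp (u v : Vec2) (hu : u ⬝ᵥ u = 1) :
    v 0 = (u ⬝ᵥ v) * u 0 - crs u v * u 1 ∧ v 1 = (u ⬝ᵥ v) * u 1 + crs u v * u 0 := by
  simp only [dot2, crs] at *
  constructor
  · linear_combination (- v 0) * hu
  · linear_combination (- v 1) * hu

lemma orth_dot {R : Matrix (Fin 2) (Fin 2) ℝ} (hR : R ∈ Matrix.orthogonalGroup (Fin 2) ℝ)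
    (u v : Vec2) : R.mulVec u ⬝ᵥ R.mulVec v = u ⬝ᵥ v := by
  rw [Matrix.mem_orthogonalGroup_iff'] at hR
  rw [Matrix.dotProduct_mulVec, ← Matrix.mulVec_transpose, Matrix.mulVec_mulVec]
  have : Rᵀ * R = 1 := hR
  rw [this, Matrix.one_mulVec]

lemma ex_rot (u u' : Vec2) (hu : u ⬝ᵥ u = 1) (hu' : u' ⬝ᵥ u' = 1) :
    ∃ R ∈ Matrix.orthogonalGroup (Fin 2) ℝ, u' = R.mulVec u ∧
      ∀ v v' : Vec2, v ⬝ᵥ u = v' ⬝ᵥ u' → crs u v = crs u' v' → v' = R.mulVec v := by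
  have key : ∀ v v' : Vec2, v ⬝ᵥ u = v' ⬝ᵥ u' → crs u v = crs u' v' →
      v' = (!![u ⬝ᵥ u', -crs u u'; crs u u', u ⬝ᵥ u'] : Matrix (Fin 2) (Fin 2) ℝ).mulVec v := by
    intro v v' h1 h2
    obtain ⟨a, b⟩ := decomp u' v' hu'
    rw [← h2, dotProduct_comm, ← h1] at a b
    apply vec2_ext
    · rw [a]; simp [Matrix.mulVec, dot2, crs, Matrix.vecHead, Matrix.vecTail]; ring
    · rw [b]; simp [Matrix.mulVec, dot2, crs, Matrix.vecHead, Matrix.vecTail]; ring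
  refine ⟨_, orth_rot (u ⬝ᵥ u') (crs u u') ?_, ?_, key⟩
  · have := lagr u u'
    rw [hu, hu'] at this; linarith
  · apply key
    · rw [hu, hu']
    · simp only [crs]; ring

lemma ex_refl (u u' : Vec2) (hu : u ⬝ᵥ u = 1) (hu' : u' ⬝ᵥ u' = 1) :
    ∃ R ∈ Matrix.orthogonalGroup (Fin 2) ℝ, u' = R.mulVec u ∧
      ∀ v v' : Vec2, v ⬝ᵥ u = v' ⬝ᵥ u' → crs u v = - crs u' v' → v' = R.mulVec v := by
  have key : ∀ v v' : Vec2, v ⬝ᵥ u = v' ⬝ᵥ u' → crs u v = - crs u' v' →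
      v' = (!![u 0 * u' 0 - u 1 * u' 1, u 0 * u' 1 + u 1 * u' 0;
        u 0 * u' 1 + u 1 * u' 0, -(u 0 * u' 0 - u 1 * u' 1)] :
          Matrix (Fin 2) (Fin 2) ℝ).mulVec v := by
    intro v v' h1 h2
    obtain ⟨a, b⟩ := decomp u' v' hu'
    have h3 : crs u' v' = - crs u v := by linarith
    rw [h3, dotProduct_comm, ← h1] at a b
    apply vec2_ext
    · rw [a]; simp [Matrix.mulVec, dot2, crs, Matrix.vecHead, Matrix.vecTail]; ring
    · rw [b]; simp [Matrix.mulVec, dot2, crs, Matrix.vecHead, Matrix.vecTail]; ring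
  refine ⟨_, orth_refl _ _ ?_, ?_, key⟩
  · rw [dot2] at hu hu'
    linear_combination hu * (u' 0 * u' 0 + u' 1 * u' 1) + hu'
  · apply key
    · rw [hu, hu']
    · simp only [crs]; ring

lemma ex_two (u v u' v' : Vec2) (hu : u ⬝ᵥ u = 1) (hu' : u' ⬝ᵥ u' = 1)
    (hv : v ⬝ᵥ v = 1) (hv' : v' ⬝ᵥ v' = 1) (h : u ⬝ᵥ v = u' ⬝ᵥ v') :
    ∃ R ∈ Matrix.orthogonalGroup (Fin 2) ℝ, u' = R.mulVec u ∧ v' = R.mulVec v := by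
  have h1 := lagr u v
  have h2 := lagr u' v'
  have h3 : crs u v ^ 2 = crs u' v' ^ 2 := by rw [h1, h2, hu, hv, hu', hv', h]
  have h4 : v ⬝ᵥ u = v' ⬝ᵥ u' := by rw [dotProduct_comm, h, dotProduct_comm]
  rcases sq_eq_sq_iff_eq_or_eq_neg.1 h3 with h5 | h5
  · obtain ⟨R, hR, a, b⟩ := ex_rot u u' hu hu'
    exact ⟨R, hR, a, b v v' h4 h5⟩
  · obtain ⟨R, hR, a, b⟩ := ex_refl u u' hu hu'
    exact ⟨R, hR, a, b v v' h4 h5⟩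

lemma two_dots (u v x y : Vec2) (hc : crs u v ≠ 0) (h1 : u ⬝ᵥ x = u ⬝ᵥ y)
    (h2 : v ⬝ᵥ x = v ⬝ᵥ y) : x = y := by
  simp only [dot2] at h1 h2
  apply vec2_ext <;> apply mul_left_cancel₀ hc <;> unfold crs
  · linear_combination (v 1) * h1 - (u 1) * h2
  · linear_combination (u 0) * h2 - (v 0) * h1

lemma good_two {R : Matrix (Fin 2) (Fin 2) ℝ} (hR : R ∈ Matrix.orthogonalGroup (Fin 2) ℝ)
    (u v w u' v' w' : Vec2) (hu : u' = R.mulVec u) (hv : v' = R.mulVec v)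
    (hc : crs u v ≠ 0) (h1 : u' ⬝ᵥ w' = u ⬝ᵥ w) (h2 : v' ⬝ᵥ w' = v ⬝ᵥ w) :
    w' = R.mulVec w := by
  have hc' : crs u' v' ≠ 0 := by
    intro h0
    apply hc
    have a := lagr u' v'
    have b := lagr u v
    subst hu hv
    rw [orth_dot hR, orth_dot hR, orth_dot hR, ← b, h0] at a
    exact pow_eq_zero_iff (two_ne_zero) |>.1 (by linarith)
  apply two_dots u' v' _ _ hc'
  · rw [h1, hu, orth_dot hR]
  · rw [h2, hv, orth_dot hR]

lemma good_par {R : Matrix (Fin 2) (Fin 2) ℝ}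
    (u w u' w' : Vec2) (hu : u' = R.mulVec u)
    (uu : u ⬝ᵥ u = 1) (uu' : u' ⬝ᵥ u' = 1) (ww : w ⬝ᵥ w = 1) (ww' : w' ⬝ᵥ w' = 1)
    (hc : crs u w = 0) (h1 : u' ⬝ᵥ w' = u ⬝ᵥ w) :
    w' = R.mulVec w := by
  have a := lagr u' w'
  have b := lagr u w
  have c : crs u' w' = 0 := by
    rw [uu', ww', h1] at a
    rw [uu, ww, hc] at b
    exact pow_eq_zero_iff (two_ne_zero) |>.1 (by linarith)
  have d : w = (u ⬝ᵥ w) • u := by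
    obtain ⟨x, y⟩ := decomp u w uu
    apply vec2_ext
    · simp only [Pi.smul_apply, smul_eq_mul]; rw [hc] at x; linarith
    · simp only [Pi.smul_apply, smul_eq_mul]; rw [hc] at y; linarith
  have d' : w' = (u' ⬝ᵥ w') • u' := by
    obtain ⟨x, y⟩ := decomp u' w' uu'
    apply vec2_ext
    · simp only [Pi.smul_apply, smul_eq_mul]; rw [c] at x; linarith
    · simp only [Pi.smul_apply, smul_eq_mul]; rw [c] at y; linarith
  rw [d', d, h1, hu, Matrix.mulVec_smul]

lemma nrm_pos {x : Vec2} (h : x ≠ 0) : 0 < nrm x := by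
  apply Real.sqrt_pos.2
  have : 0 ≤ x ⬝ᵥ x := by rw [dot2]; nlinarith [mul_self_nonneg (x 0), mul_self_nonneg (x 1)]
  exact lt_of_le_of_ne this (fun h0 => h (dotProduct_self_eq_zero.1 h0.symm))

lemma brg_unit {x y : Vec2} (h : x ≠ y) : brg x y ⬝ᵥ brg x y = 1 := by
  have h0 := nrm_pos (sub_ne_zero.2 h)
  have h1 : nrm (x - y) * nrm (x - y) = (x - y) ⬝ᵥ (x - y) := by
    apply Real.mul_self_sqrt
    rw [dot2]; nlinarith [mul_self_nonneg ((x - y) 0), mul_self_nonneg ((x - y) 1)]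
  unfold brg
  rw [smul_dotProduct, dotProduct_smul, ← h1]
  simp only [smul_eq_mul]
  field_simp

lemma brg_neg (x y : Vec2) : brg y x = - brg x y := by
  have : nrm (y - x) = nrm (x - y) := by
    unfold nrm
    rw [← neg_sub x y, neg_dotProduct_neg]
  unfold brg
  rw [this, ← neg_sub x y, smul_neg]

/-- degenerate triangle -/
lemma crs_brg {x y z : Vec2} (hy : x ≠ y) (hz : x ≠ z)
    (h : crs (brg x y) (brg x z) = 0) : crs (brg x y) (brg y z) = 0 := by
  have h1 := nrm_pos (sub_ne_zero.2 hy)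
  have h2 := nrm_pos (sub_ne_zero.2 hz)
  unfold brg crs at *
  simp only [Pi.smul_apply, smul_eq_mul, Pi.sub_apply] at *
  generalize (nrm (y - z))⁻¹ = c
  have h3 : (nrm (x - y))⁻¹ * (nrm (x - z))⁻¹ *
      ((x 0 - y 0) * (x 1 - z 1) - (x 1 - y 1) * (x 0 - z 0)) = 0 := by
    linear_combination h
  have h4 := (mul_eq_zero.1 h3).resolve_left (by positivity)
  linear_combination (nrm (x - y))⁻¹ * c * h4

/-- two configurations of pairwise distinct points in the plane have all
angle cosines equal (over the complete graph) if and only if all their bearing vectors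
agree up to a single common orthogonal transformation of the plane. -/
theorem angle_congruent_iff_bearing_congruent
    {n : ℕ} (p q : Fin n → Vec2)
    (hp : ∀ i j : Fin n, i ≠ j → p i ≠ p j)
    (hq : ∀ i j : Fin n, i ≠ j → q i ≠ q j) :
    (∀ i j k : Fin n, i ≠ j → i ≠ k → j ≠ k →
        brg (q i) (q j) ⬝ᵥ brg (q i) (q k) = brg (p i) (p j) ⬝ᵥ brg (p i) (p k)) ↔
    (∃ R ∈ Matrix.orthogonalGroup (Fin 2) ℝ,
        ∀ i j : Fin n, i ≠ j → brg (q i) (q j) = R.mulVec (brg (p i) (p j))) := by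
  constructor
  · intro H
    have up : ∀ i j, i ≠ j → brg (p i) (p j) ⬝ᵥ brg (p i) (p j) = 1 :=
      fun i j h => brg_unit (hp i j h)
    have uq : ∀ i j, i ≠ j → brg (q i) (q j) ⬝ᵥ brg (q i) (q j) = 1 :=
      fun i j h => brg_unit (hq i j h)
    -- the dot products also agree for repeated indices
    have H' : ∀ i j k : Fin n, i ≠ j → i ≠ k →
        brg (q i) (q j) ⬝ᵥ brg (q i) (q k) = brg (p i) (p j) ⬝ᵥ brg (p i) (p k) := by
      intro i j k h1 h2
      by_cases h3 : j = k
      · subst h3; rw [up i j h1, uq i j h1]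
      · exact H i j k h1 h2 h3
    by_cases hn : ∃ i j : Fin n, i ≠ j
    swap
    · push Not at hn
      exact ⟨1, one_mem _, fun i j h => absurd (hn i j) h⟩
    obtain ⟨i, j, hij⟩ := hn
    have star : ∃ R ∈ Matrix.orthogonalGroup (Fin 2) ℝ,
        ∀ l : Fin n, i ≠ l → brg (q i) (q l) = R.mulVec (brg (p i) (p l)) := by
      by_cases hc : ∃ k, i ≠ k ∧ crs (brg (p i) (p j)) (brg (p i) (p k)) ≠ 0
      · obtain ⟨k, hik, hc⟩ := hc
        obtain ⟨R, hR, a, b⟩ := ex_two _ _ _ _ (up i j hij) (uq i j hij) (up i k hik) (uq i k hik)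
          (H' i j k hij hik).symm
        exact ⟨R, hR, fun l hl => good_two hR _ _ _ _ _ _ a b hc (H' i j l hij hl)
          (H' i k l hik hl)⟩
      · push Not at hc
        obtain ⟨R, hR, a, -⟩ := ex_rot _ _ (up i j hij) (uq i j hij)
        exact ⟨R, hR, fun l hl => good_par _ _ _ _ a (up i j hij) (uq i j hij) (up i l hl)
          (uq i l hl) (hc l hl) (H' i j l hij hl)⟩
    obtain ⟨R, hR, S⟩ := star
    refine ⟨R, hR, fun l m hlm => ?_⟩
    by_cases hl : i = l
    · subst hl; exact S m hlm
    by_cases hm : i = m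
    · subst hm
      rw [brg_neg (q i), brg_neg (p i), S l hl, Matrix.mulVec_neg]
    have e1 : brg (q i) (q l) ⬝ᵥ brg (q l) (q m) = brg (p i) (p l) ⬝ᵥ brg (p l) (p m) := by
      rw [brg_neg (q l) (q i), brg_neg (p l) (p i), neg_dotProduct, neg_dotProduct,
        H' l i m (Ne.symm hl) hlm]
    have e2 : brg (q i) (q m) ⬝ᵥ brg (q l) (q m) = brg (p i) (p m) ⬝ᵥ brg (p l) (p m) := by
      rw [brg_neg (q m) (q i), brg_neg (p m) (p i), brg_neg (q m) (q l), brg_neg (p m) (p l),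
        neg_dotProduct_neg, neg_dotProduct_neg, H' m i l (Ne.symm hm) (Ne.symm hlm)]
    by_cases hc : crs (brg (p i) (p l)) (brg (p i) (p m)) = 0
    · exact good_par _ _ _ _ (S l hl) (up i l hl) (uq i l hl) (up l m hlm) (uq l m hlm)
        (crs_brg (hp i l hl) (hp i m hm) hc) e1
    · exact good_two hR _ _ _ _ _ _ (S l hl) (S m hm) hc e1 e2
  · rintro ⟨R, hR, S⟩ i j k hij hik -
    rw [S i j hij, S i k hik, orth_dot hR]
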